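/- arXiv:1911.03990 — 2 statements merged into one kernel-verified Lean document; each statement's English description precedes it below -/
import Mathlib

section
/- Tableau Lifting Theorem, even case: Let D ≥ 4 be even and m ≥ 2. Let d ≥ 1, let ρ = (ρ_1 ≥ … ≥ ρ_m ≥ 0) be a partition of d with at most m parts, and let λ be a partition of d·D with at most m rows. Let S be a regular tableau of shape λ with entries in {1,…,m} and content D·ρ (entry i occurs exactly D·ρ_i times). Set e_ρ := Σ_{i=1}^{m} ⌈ρ_i/(D−2)⌉ and δ := m·e_ρ + d. Then there exists a tableau T of shape λ + (m × (e_ρ·D)) with entries in {1,…,δ} in which every entry of {1,…,δ} appears exactly D times, such that: (1) for every map φ : {1,…,δ} → {1,…,m} for which φ(T) is regular, rightpart(φ(T)) lies in the S_m-orbit of S; (2) for every map φ : {1,…,δ} → {1,…,m} for which φ(T) is regular, leftpart(φ(T)) is duplex; (3) there exists a map φ : {1,…,δ} → {1,…,m} such that φ(T) is regular and rightpart(φ(T)) = S. -/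
open scoped BigOperators

/-- The `c`-th column of a tableau of shape `lam` (row lengths `lam r`),
read from top to bottom. -/
def tabCol {m : ℕ} {A : Type*} (lam : Fin m → ℕ) (T : (r : Fin m) → Fin (lam r) → A)
    (c : ℕ) : List A :=
  (List.finRange m).filterMap (fun r => if h : c < lam r then some (T r ⟨c, h⟩) else none)

/-- A tableau is regular if no column has a repeated entry. -/
def TabRegular {m : ℕ} {A : Type*} (lam : Fin m → ℕ)
    (T : (r : Fin m) → Fin (lam r) → A) : Prop :=
  ∀ c : ℕ, (tabCol lam T c).Nodup

/-- The number of columns of the shape `lam`. -/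
def tabWidth {m : ℕ} (lam : Fin m → ℕ) : ℕ := Finset.univ.sup lam

/-- A tableau is duplex if every column (as an ordered sequence of entries)
occurs an even number of times among its columns. -/
def TabDuplex {m : ℕ} {A : Type*} [DecidableEq A] (lam : Fin m → ℕ)
    (T : (r : Fin m) → Fin (lam r) → A) : Prop :=
  ∀ c < tabWidth lam,
    Even (((Finset.range (tabWidth lam)).filter
      (fun c' => tabCol lam T c' = tabCol lam T c)).card)

/-- The number of occurrences of the entry `a` in the tableau `T`. -/
def tabCount {m : ℕ} {A : Type*} [DecidableEq A] (lam : Fin m → ℕ)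
    (T : (r : Fin m) → Fin (lam r) → A) (a : A) : ℕ :=
  ∑ r : Fin m, ((Finset.univ : Finset (Fin (lam r))).filter (fun c => T r c = a)).card

/-- The leftmost `e` columns of a tableau of shape `(m × e) + lam`. -/
def tabLeft {m : ℕ} {A : Type*} (lam : Fin m → ℕ) (e : ℕ)
    (T : (r : Fin m) → Fin (e + lam r) → A) : (r : Fin m) → Fin e → A :=
  fun r c => T r (Fin.castLE (Nat.le_add_right e (lam r)) c)

/-- The shape-`lam` subtableau of a tableau of shape `(m × e) + lam` formed by the
columns after the leftmost `e` columns. -/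
def tabRight {m : ℕ} {A : Type*} (lam : Fin m → ℕ) (e : ℕ)
    (T : (r : Fin m) → Fin (e + lam r) → A) : (r : Fin m) → Fin (lam r) → A :=
  fun r c => T r ⟨e + c.1, Nat.add_lt_add_left c.isLt e⟩

/-!
Group the columns of the rectangle into blocks of `D` columns, each block with a row as its type,
and single out one anchor block. The boxes are split into `m` classes: class `l` consists of row `l`
of the rectangle and of the boxes of `S` with entry `l`, and each class is filled with its own
symbols, `D` copies of each. In row `l`, every block other than the anchor whose type is not `l`
carries a private symbol throughout; the other symbols of the class are chained together by the
blocks of type `l`, consecutive blocks sharing one symbol.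

Let `φ(T)` be regular. Every column of the rectangle is then a permutation of the colors. A block
other than the anchor is constant in all rows but the one of its type, hence in that row too.
Constant blocks of type `l` force all chained symbols of class `l` to share one color; if `l` is not
the type of the anchor, the anchor block is therefore constant in row `l`, hence in the remaining
row too, and then the conclusion holds for all classes. The colors of the classes form a column of
the anchor block, so they are a permutation, and it carries `S` to the right part of `φ(T)`.
-/

section Tableau

variable {m : ℕ} {A B : Type*} {lam : Fin m → ℕ}

lemma tabRegular_iff {T : (r : Fin m) → Fin (lam r) → A} :
    TabRegular lam T ↔ ∀ (c : ℕ) (r r' : Fin m) (h : c < lam r) (h' : c < lam r'),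
      T r ⟨c, h⟩ = T r' ⟨c, h'⟩ → r = r' := by
  refine forall_congr' fun c => ⟨fun hnodup r r' h h' heq => ?_, fun hinj => ?_⟩
  · rw [tabCol, List.Nodup, List.pairwise_filterMap] at hnodup
    by_contra hne
    have hsymm : Std.Symm fun r r' : Fin m =>
        ∀ b, (if h : c < lam r then some (T r ⟨c, h⟩) else none) = some b →
          ∀ b', (if h : c < lam r' then some (T r' ⟨c, h⟩) else none) = some b' → b ≠ b' :=
      ⟨fun _ _ hrr' b hb b' hb' => (hrr' b' hb' b hb).symm⟩
    exact hnodup.forall (List.mem_finRange r) (List.mem_finRange r') hne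
      _ (dif_pos h) _ (dif_pos h') heq
  · refine (List.nodup_finRange m).filterMap fun r r' b hb hb' => ?_
    simp only [Option.mem_def, Option.dite_none_right_eq_some, Option.some.injEq] at hb hb'
    obtain ⟨⟨h, hb⟩, h', hb'⟩ := And.intro hb hb'
    exact hinj r r' h h' (hb.trans hb'.symm)

lemma tabRegular_const_iff {e : ℕ} {L : Fin m → Fin e → A} :
    TabRegular (fun _ => e) L ↔ ∀ c, Function.Injective fun r => L r c := by
  rw [tabRegular_iff]
  exact ⟨fun hL c r r' => hL c r r' c.2 c.2, fun hL c r r' h _ heq => hL ⟨c, h⟩ heq⟩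

lemma tabCount_eq_card_filter [DecidableEq A] (T : (r : Fin m) → Fin (lam r) → A) (s : A) :
    tabCount lam T s = (Finset.univ.filter fun x : Σ r, Fin (lam r) => T x.1 x.2 = s).card := by
  simp only [tabCount, Finset.card_filter, Fintype.sum_sigma]

/-- The tableau of shape `(m × e) + lam` with left part `L` and right part `R`. -/
def tabAppend {e : ℕ} (L : Fin m → Fin e → A) (R : (r : Fin m) → Fin (lam r) → A) :
    (r : Fin m) → Fin (e + lam r) → A :=
  fun r => Fin.append (L r) (R r)

variable {e : ℕ} (L : Fin m → Fin e → A) (R : (r : Fin m) → Fin (lam r) → A)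

lemma tabLeft_tabAppend : tabLeft lam e (tabAppend L R) = L := by
  funext r c
  exact Fin.append_left (L r) (R r) c

lemma tabRight_tabAppend : tabRight lam e (tabAppend L R) = R := by
  funext r c
  exact Fin.append_right (L r) (R r) c

lemma map_tabAppend (φ : A → B) :
    (fun r c => φ (tabAppend L R r c)) =
      tabAppend (fun r c => φ (L r c)) (fun r c => φ (R r c)) := by
  funext r c
  induction c using Fin.addCases <;> simp [tabAppend]

lemma tabCount_tabAppend [DecidableEq A] (a : A) :
    tabCount (fun r => e + lam r) (tabAppend L R) a =
      tabCount (fun _ => e) L a + tabCount lam R a := by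
  rw [tabCount, tabCount, tabCount, ← Finset.sum_add_distrib]
  refine Finset.sum_congr rfl fun r _ => ?_
  rw [Finset.card_filter, Finset.card_filter, Finset.card_filter, Fin.sum_univ_add]
  simp only [tabAppend, Fin.append_left, Fin.append_right]

variable {L R}

lemma tabRegular_tabAppend_iff :
    TabRegular (fun r => e + lam r) (tabAppend L R) ↔
      TabRegular (fun _ => e) L ∧ TabRegular lam R := by
  have left_apply (r) {c : ℕ} (h : c < e) (h' : c < e + lam r) :
      tabAppend L R r ⟨c, h'⟩ = L r ⟨c, h⟩ := Fin.append_left (L r) (R r) ⟨c, h⟩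
  have right_apply (r) {c : ℕ} (h : c < lam r) (h' : e + c < e + lam r) :
      tabAppend L R r ⟨e + c, h'⟩ = R r ⟨c, h⟩ := Fin.append_right (L r) (R r) ⟨c, h⟩
  simp only [tabRegular_iff]
  refine ⟨fun hT => ⟨fun c r r' h h' heq => ?_, fun c r r' h h' heq => ?_⟩,
    fun ⟨hL, hR⟩ c r r' h h' heq => ?_⟩
  · refine hT c r r' (by omega) (by omega) ?_
    rwa [left_apply r h, left_apply r' h']
  · refine hT (e + c) r r' (by omega) (by omega) ?_
    rwa [right_apply r h, right_apply r' h']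
  · obtain hc | ⟨c, rfl⟩ := (lt_or_ge c e).imp_right Nat.exists_eq_add_of_le
    · exact hL c r r' hc hc (by rwa [left_apply r hc, left_apply r' hc] at heq)
    · rw [right_apply r (by omega), right_apply r' (by omega)] at heq
      exact hR c _ _ _ _ heq

/-- Every column occurs a multiple of `D` times among the columns, so that `TabDuplex` is the
case `D = 2`. -/
def TabPlex [DecidableEq A] (D : ℕ) (lam : Fin m → ℕ) (T : (r : Fin m) → Fin (lam r) → A) : Prop :=
  ∀ c < tabWidth lam,
    D ∣ ((Finset.range (tabWidth lam)).filter fun c' => tabCol lam T c' = tabCol lam T c).card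

lemma TabPlex.tabDuplex [DecidableEq A] {D : ℕ} {T : (r : Fin m) → Fin (lam r) → A}
    (hT : TabPlex D lam T) (hD : Even D) : TabDuplex lam T :=
  fun c hc => even_iff_two_dvd.2 (hD.two_dvd.trans (hT c hc))

lemma tabCount_comp_equiv [DecidableEq A] {P : Type*} [Fintype P] (pos : Fin e ≃ P)
    (L : Fin m → P → A) (s : A) :
    tabCount (fun _ => e) (fun r c => L r (pos c)) s =
      ∑ r, (Finset.univ.filter fun p => L r p = s).card := by
  simp only [tabCount, Finset.card_filter]
  exact Finset.sum_congr rfl fun r _ => pos.sum_comp fun p => if L r p = s then 1 else 0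

lemma tabCol_const_eq_iff {L : Fin m → Fin e → A} (c c' : Fin e) :
    tabCol (fun _ => e) L c = tabCol (fun _ => e) L c' ↔ ∀ r, L r c = L r c' := by
  simp [tabCol, List.map_inj_left]

lemma tabPlex_of_blocks [DecidableEq A] {J : Type*} [Finite J] {D : ℕ} (pos : Fin e ≃ J × Fin D)
    {L : Fin m → J × Fin D → A} (hL : ∀ r j c c', L r (j, c) = L r (j, c')) :
    TabPlex D (fun _ => e) (fun r c => L r (pos c)) := by
  have := Fintype.ofFinite J
  intro c hc
  have hwidth : tabWidth (fun _ : Fin m => e) = e := by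
    have ⟨r, _⟩ := Finset.lt_sup_iff.1 hc
    exact Finset.sup_const ⟨r, Finset.mem_univ r⟩ e
  rw [hwidth] at hc ⊢
  obtain ⟨c, rfl⟩ : ∃ c' : Fin e, (c' : ℕ) = c := ⟨⟨c, hc⟩, rfl⟩
  rw [Finset.card_filter, Finset.sum_range, ← Equiv.sum_comp pos.symm, Fintype.sum_prod_type]
  refine Finset.dvd_sum fun j _ => ?_
  simp only [tabCol_const_eq_iff, Equiv.apply_symm_apply, hL _ j _ (pos c).2]
  split_ifs <;> simp

end Tableau

section Filling

lemma exists_equiv_apply_eq {γ α β : Type*} [Fintype α] [Fintype β]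
    (hcard : Fintype.card α = Fintype.card β) {i : γ → α} (hi : Function.Injective i)
    {f : γ → β} (hf : Function.Injective f) : ∃ e : α ≃ β, ∀ x, e (i x) = f x := by
  classical
  let e₀ : α ≃ β := Fintype.equivOfCardEq hcard
  let onRange : Set.range i ≃ Set.range (e₀.symm ∘ f) :=
    (Equiv.ofInjective i hi).symm.trans (Equiv.ofInjective _ (e₀.symm.injective.comp hf))
  refine ⟨onRange.extendSubtype.trans e₀, fun x => ?_⟩
  have hx : onRange.extendSubtype (i x) = e₀.symm (f x) := by
    rw [Equiv.extendSubtype_apply_of_mem _ _ (Set.mem_range_self x)]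
    simp [onRange]
  simp [hx]

lemma chain_index_injective {w t t' c c' : ℕ} (hw : 0 < w) (hc : c ≤ w) (hc' : c' ≤ w)
    (hidx : t * w + c = t' * w + c') (hlast : c = w ↔ c' = w) : t = t' ∧ c = c' := by
  obtain rfl | hlt := hc.eq_or_lt
  · obtain rfl := hlast.1 rfl
    exact ⟨Nat.eq_of_mul_eq_mul_right hw (by omega), rfl⟩
  · have hlt' : c' < w := hc'.lt_of_ne (mt hlast.2 hlt.ne)
    have ht : t = t' := by
      simpa [Nat.mul_add_div hw, Nat.div_eq_of_lt, hlt, hlt', mul_comm _ w] using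
        congrArg (· / w) hidx
    subst ht
    exact ⟨rfl, by omega⟩

/-- Consecutive blocks share exactly one symbol, so `k` blocks of `D` boxes chain together
`k * (D - 1) + 1` symbols. -/
lemma exists_chain_filling {B : Type*} [Fintype B] {D k n : ℕ} (hD : 2 ≤ D) {i : Fin k × Fin D → B}
    (hi : Function.Injective i) (hB : Fintype.card B = n * D) :
    ∃ E : B ≃ Fin n × Fin D, ∀ (t : Fin k) (c : Fin D) (h : t.1 * (D - 1) + c.1 < n),
      (E (i (t, c))).1 = ⟨t.1 * (D - 1) + c.1, h⟩ := by
  -- A shared symbol is the last one of its block (copy `1`) or the first of the next (copy `0`).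
  let seed (p : {p : Fin k × Fin D // p.1.1 * (D - 1) + p.2.1 < n}) : Fin n × Fin D :=
    (⟨_, p.2⟩, if p.1.2.1 = D - 1 then ⟨1, hD⟩ else ⟨0, by omega⟩)
  have seed_injective : Function.Injective seed := by
    rintro ⟨⟨t, c⟩, hp⟩ ⟨⟨t', c'⟩, hp'⟩ heq
    obtain ⟨hidx, hcopy⟩ := Prod.ext_iff.1 heq
    have hlast : c.1 = D - 1 ↔ c'.1 = D - 1 := by
      dsimp only [seed] at hcopy
      split_ifs at hcopy <;> simp_all
    obtain ⟨ht, hc⟩ := chain_index_injective (by omega) (by omega) (by omega)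
      (Fin.ext_iff.1 hidx) hlast
    exact Subtype.ext (Prod.ext (Fin.ext ht) (Fin.ext hc))
  obtain ⟨E, hE⟩ := exists_equiv_apply_eq (by simpa using hB)
    (hi.comp Subtype.val_injective) seed_injective
  exact ⟨E, fun t c h => congrArg Prod.fst (hE ⟨(t, c), h⟩)⟩

theorem exists_connecting_filling {K B V X : Type*} [Fintype K] [Fintype B] [Fintype V] {D : ℕ}
    (hD : 2 ≤ D) {i : K × Fin D → B} (hi : Function.Injective i)
    (hB : Fintype.card B = Fintype.card V * D)
    (hV : Fintype.card V ≤ Fintype.card K * (D - 1) + 1) :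
    ∃ E : B ≃ V × Fin D, ∀ f : V → X,
      (∀ k c c', f (E (i (k, c))).1 = f (E (i (k, c'))).1) → ∀ v v', f v = f v' := by
  let numK := Fintype.equivFin K
  let numV := Fintype.equivFin V
  obtain ⟨E, hE⟩ := exists_chain_filling hD
    (hi.comp (numK.symm.injective.prodMap Function.injective_id)) hB
  refine ⟨E.trans (numV.symm.prodCongr (Equiv.refl _)), fun f hf => ?_⟩
  have succ_eq (x : ℕ) (hx : x + 1 < Fintype.card V) :
      f (numV.symm ⟨x + 1, hx⟩) = f (numV.symm ⟨x, by omega⟩) := by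
    have hw : 0 < D - 1 := by omega
    have hmod := Nat.mod_lt x hw
    have hdiv : x / (D - 1) * (D - 1) + x % (D - 1) = x := Nat.div_add_mod' x (D - 1)
    let t : Fin (Fintype.card K) := ⟨x / (D - 1), (Nat.div_lt_iff_lt_mul hw).2 (by omega)⟩
    let c : Fin D := ⟨x % (D - 1), by omega⟩
    let c' : Fin D := ⟨x % (D - 1) + 1, by omega⟩
    have symbol_c : (E (i (numK.symm t, c))).1 = ⟨x, by omega⟩ :=
      (hE t c (by simp only [t, c]; omega)).trans (Fin.ext hdiv)
    have symbol_c' : (E (i (numK.symm t, c'))).1 = ⟨x + 1, hx⟩ :=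
      (hE t c' (by simp only [t, c']; omega)).trans (Fin.ext (by simp only [t, c']; omega))
    simpa [symbol_c, symbol_c'] using hf (numK.symm t) c' c
  have eq_zero (x : ℕ) (hx : x < Fintype.card V) :
      f (numV.symm ⟨x, hx⟩) = f (numV.symm ⟨0, by omega⟩) := by
    induction x with
    | zero => rfl
    | succ x ih => rw [succ_eq, ih]
  intro v v'
  simpa using (eq_zero _ (numV v).2).trans (eq_zero _ (numV v').2).symm

end Filling

section Forcing

variable {ι J C : Type*}

/-- `h` colors the boxes of one class: those in a row of the rectangle, where `(j, c)` is the `c`-th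
box of block `j`, and the remaining boxes `R`. `BlockConst h j` says that the boxes of block `j` all
have the same color. -/
def BlockConst {R X : Type*} (h : (J × C) ⊕ R → X) (j : J) : Prop :=
  ∀ c₁ c₂, h (.inl (j, c₁)) = h (.inl (j, c₂))

/-- The blocks of the rectangle in which class `l` does not use private symbols: those of type `l`
and the anchor block `a`. -/
abbrev IsOwnBlock (t : J → ι) (a : J) (l : ι) (j : J) : Prop := t j = l ∨ j = a

/-- What the filling of class `l` forces on the colorings `h` it induces: all blocks that are not
own are constant, and constancy on the blocks of type `l` spreads to the anchor block and `R`. -/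
structure IsRigidRow {R X : Type*} (t : J → ι) (a : J) (l : ι) (h : (J × C) ⊕ R → X) : Prop where
  foreign_blockConst : ∀ j, ¬IsOwnBlock t a l j → BlockConst h j
  exists_anchor_eq : (∀ j, t j = l → BlockConst h j) →
    ∃ x, (∀ c, h (.inl (a, c)) = x) ∧ ∀ r, h (.inr r) = x

lemma apply_eq_of_injective_of_eq_off [Finite ι] {u v : ι → ι} (hu : Function.Injective u)
    (hv : Function.Injective v) {l : ι} (huv : ∀ r ≠ l, u r = v r) : u l = v l := by
  obtain ⟨r, hr⟩ := Finite.surjective_of_injective hv (u l)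
  obtain rfl | hrl := eq_or_ne r l
  · exact hr.symm
  · exact absurd (hu ((huv r hrl).trans hr)) hrl

section

variable [Finite ι] {R : ι → Type*} {t : J → ι} {a : J} {h : (l : ι) → (J × C) ⊕ R l → ι}

lemma blockConst_of_forall_ne {j : J} {l : ι}
    (hinj : ∀ p, Function.Injective fun r => h r (.inl p))
    (hconst : ∀ r ≠ l, BlockConst (h r) j) : BlockConst (h l) j :=
  fun c c' => apply_eq_of_injective_of_eq_off (hinj (j, c)) (hinj (j, c'))
    fun r hr => hconst r hr c c'

lemma blockConst_of_isRigidRow (hrigid : ∀ l, IsRigidRow t a l (h l))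
    (hinj : ∀ p, Function.Injective fun r => h r (.inl p)) (l : ι) (j : J) :
    BlockConst (h l) j := by
  have of_ne_anchor : ∀ j ≠ a, ∀ l, BlockConst (h l) j := by
    intro j hj l
    obtain rfl | hl := eq_or_ne (t j) l
    · exact blockConst_of_forall_ne hinj
        fun r hr => (hrigid r).foreign_blockConst j (by simp [hr.symm, hj])
    · exact (hrigid l).foreign_blockConst j (by simp [hl, hj])
  have anchor_of_ne : ∀ l ≠ t a, BlockConst (h l) a := by
    intro l hl c c'
    obtain ⟨x, hx, -⟩ := (hrigid l).exists_anchor_eq fun j hj =>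
      of_ne_anchor j (by rintro rfl; exact hl hj.symm) l
    rw [hx, hx]
  obtain rfl | hj := eq_or_ne j a
  · obtain rfl | hl := eq_or_ne l (t j)
    · exact blockConst_of_forall_ne hinj anchor_of_ne
    · exact anchor_of_ne l hl
  · exact of_ne_anchor j hj l

lemma exists_perm_of_isRigidRow [Nonempty C] (hrigid : ∀ l, IsRigidRow t a l (h l))
    (hinj : ∀ p, Function.Injective fun r => h r (.inl p)) :
    ∃ π : Equiv.Perm ι, ∀ l x, h l (.inr x) = π l := by
  choose x hanchor hright using fun l => (hrigid l).exists_anchor_eq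
    fun j _ => blockConst_of_isRigidRow hrigid hinj l j
  have x_injective : Function.Injective x := by
    simpa only [hanchor] using hinj (a, Classical.arbitrary C)
  exact ⟨Equiv.ofBijective x (Finite.injective_iff_bijective.1 x_injective), hright⟩

end

end Forcing

section Lifting

variable {ι J : Type*} {D : ℕ}

/-- The symbols of class `l`: a private one for each block that is not own, and those that are
chained together, `q` more than there are own blocks. -/
abbrev RowSymbol (t : J → ι) (a : J) (l : ι) (q : ℕ) : Type _ :=
  {j // ¬IsOwnBlock t a l j} ⊕ ({j // IsOwnBlock t a l j} ⊕ Fin q)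

lemma card_rowSymbol [DecidableEq ι] [Fintype J] [DecidableEq J] (t : J → ι) (a : J) (l : ι)
    (q : ℕ) :
    Fintype.card (RowSymbol t a l q) = Fintype.card J + q := by
  rw [Fintype.card_sum, Fintype.card_sum, ← add_assoc, Fintype.card_fin, add_comm (Fintype.card _),
    ← Fintype.card_sum, Fintype.card_congr (Equiv.sumCompl _)]

lemma card_ownBlock_le (t : J → ι) (a : J) (l : ι) [Fintype {j // t j = l}]
    [Fintype {j // IsOwnBlock t a l j}] :
    Fintype.card {j // IsOwnBlock t a l j} ≤ Fintype.card {j // t j = l} + 1 := by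
  simpa using Fintype.card_subtype_or (fun j => t j = l) (· = a)

lemma exists_ownBlock_filling [Finite J] {R X : Type*} [Fintype R] (hD : 2 ≤ D) (t : J → ι)
    (a : J) (l : ι) {q : ℕ} [Fintype {j // t j = l}] (hR : Fintype.card R = q * D)
    (hq : q ≤ Fintype.card {j // t j = l} * (D - 2)) :
    ∃ E : ({j // IsOwnBlock t a l j} × Fin D) ⊕ R ≃ ({j // IsOwnBlock t a l j} ⊕ Fin q) × Fin D,
      ∀ f : {j // IsOwnBlock t a l j} ⊕ Fin q → X,
        (∀ j, t j.1 = l → BlockConst (fun b => f (E b).1) j) → ∀ v v', f v = f v' := by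
  have := Fintype.ofFinite {j // IsOwnBlock t a l j}
  let ofType (p : {j // t j = l} × Fin D) : ({j // IsOwnBlock t a l j} × Fin D) ⊕ R :=
    .inl (⟨p.1, .inl p.1.2⟩, p.2)
  have ofType_injective : Function.Injective ofType := by
    rintro ⟨⟨j, _⟩, c⟩ ⟨⟨j', _⟩, c'⟩ heq
    simpa [ofType] using heq
  have symbols_le : Fintype.card ({j // IsOwnBlock t a l j} ⊕ Fin q) ≤
      Fintype.card {j // t j = l} * (D - 1) + 1 := by
    have hle := card_ownBlock_le t a l
    obtain ⟨D, rfl⟩ := Nat.exists_eq_add_of_le' hD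
    rw [Fintype.card_sum, Fintype.card_fin]
    simp only [Nat.add_sub_cancel, Nat.reduceSubDiff] at hq ⊢
    linarith
  obtain ⟨E, hE⟩ := exists_connecting_filling (X := X) hD ofType_injective
    (by simp only [Fintype.card_sum, Fintype.card_prod, Fintype.card_fin, hR, add_mul]) symbols_le
  exact ⟨E, fun f hf => hE f fun j c c' => hf ⟨j, .inl j.2⟩ j.2 c c'⟩

lemma exists_isRigidRow_filling [Finite J] {R X : Type*} [Fintype R] (hD : 2 ≤ D) (t : J → ι)
    (a : J) (l : ι) {q : ℕ} [Fintype {j // t j = l}] (hR : Fintype.card R = q * D)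
    (hq : q ≤ Fintype.card {j // t j = l} * (D - 2)) :
    ∃ E : (J × Fin D) ⊕ R ≃ RowSymbol t a l q × Fin D,
      ∀ f : RowSymbol t a l q → X, IsRigidRow t a l fun b => f (E b).1 := by
  classical
  obtain ⟨E₀, hE₀⟩ := exists_ownBlock_filling (X := X) hD t a l hR hq
  let split : J × Fin D ≃
      ({j // ¬IsOwnBlock t a l j} × Fin D) ⊕ ({j // IsOwnBlock t a l j} × Fin D) :=
    (((Equiv.sumCompl _).symm.trans (Equiv.sumComm _ _)).prodCongr (Equiv.refl _)).trans
      (Equiv.sumProdDistrib _ _ _)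
  let E : (J × Fin D) ⊕ R ≃ RowSymbol t a l q × Fin D :=
    (((split.sumCongr (Equiv.refl R)).trans (Equiv.sumAssoc _ _ _)).trans
      ((Equiv.refl _).sumCongr E₀)).trans (Equiv.sumProdDistrib _ _ _).symm
  have E_foreign (j) (hj : ¬IsOwnBlock t a l j) (c) : (E (.inl (j, c))).1 = .inl ⟨j, hj⟩ := by
    simp [E, split, Equiv.sumCompl_symm_apply_of_neg hj]
  have E_own (j) (hj : IsOwnBlock t a l j) (c) :
      (E (.inl (j, c))).1 = .inr (E₀ (.inl (⟨j, hj⟩, c))).1 := by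
    simp [E, split, Equiv.sumCompl_symm_apply_of_pos hj]
  have E_right (r) : (E (.inr r)).1 = .inr (E₀ (.inr r)).1 := by
    simp [E]
  refine ⟨E, fun f => ⟨fun j hj c c' => by simp only [E_foreign j hj], fun hconst => ?_⟩⟩
  have own_const := hE₀ (f ∘ .inr) fun ⟨j, hj⟩ hjl c c' => by
    simpa [E_own j hj] using hconst j hjl c c'
  refine ⟨f (.inr (.inl ⟨a, .inr rfl⟩)), fun c => ?_, fun r => ?_⟩
  · rw [E_own a (.inr rfl)]
    exact own_const _ _
  · rw [E_right]
    exact own_const _ _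

lemma card_filter_sigma_mk_eq {B : Type*} [Fintype B] [DecidableEq ι] {V : ι → Type*}
    [∀ l, DecidableEq (V l)] (cls : B → ι) (g : ∀ l, {x // cls x = l} → V l) (l : ι) (v : V l) :
    (Finset.univ.filter fun x => (⟨cls x, g (cls x) ⟨x, rfl⟩⟩ : Σ l, V l) = ⟨l, v⟩).card =
      (Finset.univ.filter fun y => g l y = v).card := by
  rw [← Finset.card_map (Function.Embedding.subtype _)]
  congr 1
  ext x
  simp only [Finset.mem_filter_univ, Finset.mem_map, Function.Embedding.subtype_apply]
  constructor
  · intro h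
    obtain ⟨rfl, h⟩ := Sigma.mk.inj_iff.1 h
    exact ⟨_, eq_of_heq h, rfl⟩
  · rintro ⟨⟨x, rfl⟩, rfl, rfl⟩
    rfl

lemma sum_card_filter_add_card_filter_eq {B P : Type*} [Fintype ι] [DecidableEq ι] [Fintype B]
    [Fintype P] {V : ι → Type*} [∀ l, DecidableEq (V l)] [∀ l, Finite (V l)] (cls : B → ι)
    (E : ∀ l, P ⊕ {x // cls x = l} ≃ V l × Fin D) (s : Σ l, V l) :
    ∑ r, (Finset.univ.filter fun p => ⟨r, (E r (.inl p)).1⟩ = s).card +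
      (Finset.univ.filter fun x => ⟨cls x, (E (cls x) (.inr ⟨x, rfl⟩)).1⟩ = s).card = D := by
  obtain ⟨l, v⟩ := s
  have rows_eq : ∑ r, (Finset.univ.filter fun p => (⟨r, (E r (.inl p)).1⟩ : Σ l, V l) = ⟨l, v⟩).card
      = (Finset.univ.filter fun p => (E l (.inl p)).1 = v).card := by
    rw [Finset.sum_eq_single l (fun r _ hr => by simp [hr]) (by simp)]
    simp
  have fiber_eq : ∑ b, (if (E l b).1 = v then 1 else 0) = D := by
    have := Fintype.ofFinite (V l)
    rw [(E l).sum_comp fun p => if p.1 = v then 1 else 0, Fintype.sum_prod_type,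
      Fintype.sum_eq_single v fun w hw => by simp [hw]]
    simp
  rw [rows_eq, card_filter_sigma_mk_eq cls fun l y => (E l (.inr y)).1, Finset.card_filter,
    Finset.card_filter, ← Fintype.sum_sum_type fun b => if (E l b).1 = v then 1 else 0, fiber_eq]

/-- `B` stands for the boxes right of the rectangle, and `cls` for their prescribed colors. -/
theorem exists_forcing_filling {A B : Type*} [Fintype ι] [DecidableEq ι] [Fintype J] [Fintype A]
    [DecidableEq A] [Fintype B] (hD : 2 ≤ D) (t : J → ι) (a : J) (cls : B → ι) (ρ : ι → ℕ)
    (hA : Fintype.card A = Fintype.card ι * Fintype.card J + ∑ l, ρ l)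
    (hcls : ∀ l, Fintype.card {x // cls x = l} = ρ l * D)
    (hρ : ∀ l, ρ l ≤ Fintype.card {j // t j = l} * (D - 2)) :
    ∃ (L : ι → J × Fin D → A) (N : B → A),
      (∀ s, ∑ r, (Finset.univ.filter fun p => L r p = s).card +
        (Finset.univ.filter fun x => N x = s).card = D) ∧
      (∃ φ : A → ι, (∀ r p, φ (L r p) = r) ∧ ∀ x, φ (N x) = cls x) ∧
      ∀ φ : A → ι, (∀ p, Function.Injective fun r => φ (L r p)) →
        (∀ r j c c', φ (L r (j, c)) = φ (L r (j, c'))) ∧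
        ∃ π : Equiv.Perm ι, ∀ x, φ (N x) = π (cls x) := by
  classical
  choose E hE using fun l => exists_isRigidRow_filling (X := ι) hD t a l (hcls l) (hρ l)
  let name : (Σ l, RowSymbol t a l (ρ l)) ≃ A := Fintype.equivOfCardEq (by
    rw [Fintype.card_sigma, hA]
    simp only [card_rowSymbol, Finset.sum_add_distrib, Finset.sum_const, Finset.card_univ,
      smul_eq_mul])
  refine ⟨fun r p => name ⟨r, (E r (.inl p)).1⟩,
    fun x => name ⟨cls x, (E (cls x) (.inr ⟨x, rfl⟩)).1⟩,
    fun s => ?_, ⟨fun s => (name.symm s).1, by simp, by simp⟩, fun φ hφ => ?_⟩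
  · simpa only [Equiv.eq_symm_apply] using sum_card_filter_add_card_filter_eq cls E (name.symm s)
  · have : Nonempty (Fin D) := ⟨⟨0, by omega⟩⟩
    let h (l : ι) : (J × Fin D) ⊕ {x // cls x = l} → ι := fun b => φ (name ⟨l, (E l b).1⟩)
    have h_rigid (l : ι) : IsRigidRow t a l (h l) := hE l fun v => φ (name ⟨l, v⟩)
    obtain ⟨π, hπ⟩ := exists_perm_of_isRigidRow h_rigid hφ
    exact ⟨blockConst_of_isRigidRow h_rigid hφ, π, fun x => hπ (cls x) ⟨x, rfl⟩⟩

end Lifting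

lemma le_natCeil_div_mul {D : ℕ} (hD : 2 < D) (n : ℕ) :
    n ≤ ⌈(n : ℚ) / ((D : ℚ) - 2)⌉₊ * (D - 2) := by
  have hcast : ((D - 2 : ℕ) : ℚ) = D - 2 := by push_cast [hD.le]; rfl
  have hpos : (0 : ℚ) < (D - 2 : ℕ) := by exact_mod_cast Nat.sub_pos_of_lt hD
  have hle := (div_le_iff₀ hpos).1 (Nat.le_ceil ((n : ℚ) / (D - 2 : ℕ)))
  rw [← hcast]
  exact_mod_cast hle

theorem tableau_lifting_even_general {D m e δ : ℕ} (hD : 2 ≤ D) {k ρ : Fin m → ℕ}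
    (hk : ∀ i, ρ i ≤ k i * (D - 2)) (hρ : 0 < ∑ i, ρ i) {lam : Fin m → ℕ}
    {S : (r : Fin m) → Fin (lam r) → Fin m} (hSreg : TabRegular lam S)
    (hScont : ∀ i, tabCount lam S i = D * ρ i) (he : e = ∑ i, k i)
    (hδ : δ = m * e + ∑ i, ρ i) :
    ∃ T : (r : Fin m) → Fin (e * D + lam r) → Fin δ,
      (∀ a, tabCount (fun r => e * D + lam r) T a = D) ∧
      (∀ φ : Fin δ → Fin m, TabRegular (fun r => e * D + lam r) (fun r c => φ (T r c)) →
        ∃ π : Equiv.Perm (Fin m),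
          tabRight lam (e * D) (fun r c => φ (T r c)) = fun r c => π (S r c)) ∧
      (∀ φ : Fin δ → Fin m, TabRegular (fun r => e * D + lam r) (fun r c => φ (T r c)) →
        TabPlex D (fun _ => e * D) (tabLeft lam (e * D) (fun r c => φ (T r c)))) ∧
      (∃ φ : Fin δ → Fin m, TabRegular (fun r => e * D + lam r) (fun r c => φ (T r c)) ∧
        tabRight lam (e * D) (fun r c => φ (T r c)) = S) := by
  obtain ⟨i, -, hi⟩ := Finset.exists_ne_zero_of_sum_ne_zero hρ.ne'
  have anchor_pos : 0 < k i := Nat.pos_of_mul_pos_right (hi.bot_lt.trans_le (hk i))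
  obtain ⟨L, N, hcount, ⟨φ₀, hL, hN⟩, hforce⟩ := exists_forcing_filling (A := Fin δ) hD
    (Sigma.fst : (Σ i, Fin (k i)) → Fin m) ⟨i, 0, anchor_pos⟩
    (fun x : Σ r, Fin (lam r) => S x.1 x.2) ρ (by simp [hδ, he])
    (fun l => by rw [Fintype.card_subtype, ← tabCount_eq_card_filter, hScont, mul_comm])
    (fun l => by rw [Fintype.card_congr (Equiv.sigmaSubtype l), Fintype.card_fin]; exact hk l)
  let pos : Fin (e * D) ≃ (Σ i, Fin (k i)) × Fin D := Fintype.equivOfCardEq (by simp [he])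
  have injective_of_tabRegular {φ : Fin δ → Fin m} (hφ : TabRegular (fun r => e * D + lam r)
      (tabAppend (fun r c => φ (L r (pos c))) fun r c => φ (N ⟨r, c⟩))) (p) :
      Function.Injective fun r => φ (L r p) := by
    simpa using tabRegular_const_iff.1 (tabRegular_tabAppend_iff.1 hφ).1 (pos.symm p)
  refine ⟨tabAppend (fun r c => L r (pos c)) fun r c => N ⟨r, c⟩, fun s => ?_, ?_⟩
  · rw [tabCount_tabAppend, tabCount_comp_equiv, tabCount_eq_card_filter]
    exact hcount s
  simp only [map_tabAppend, tabLeft_tabAppend, tabRight_tabAppend]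
  refine ⟨fun φ hφ => ?_, fun φ hφ => ?_, φ₀, ?_, ?_⟩
  · obtain ⟨-, π, hπ⟩ := hforce φ (injective_of_tabRegular hφ)
    exact ⟨π, funext₂ fun r c => hπ ⟨r, c⟩⟩
  · exact tabPlex_of_blocks pos (L := fun r p => φ (L r p))
      (hforce φ (injective_of_tabRegular hφ)).1
  · simp only [hL, hN]
    exact tabRegular_tabAppend_iff.2 ⟨tabRegular_const_iff.2 fun _ => Function.injective_id, hSreg⟩
  · simp only [hN]

/-- **Tableau Lifting Theorem, even case** (Theorem 13 of the paper, `D` even). -/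
theorem tableau_lifting_even
    (D m d : ℕ) (hD : 4 ≤ D) (hDeven : Even D) (hm : 2 ≤ m) (hd : 1 ≤ d)
    (ρ : Fin m → ℕ) (hρmono : ∀ i j : Fin m, i ≤ j → ρ j ≤ ρ i)
    (hρsum : ∑ i, ρ i = d)
    (lam : Fin m → ℕ) (hlammono : ∀ i j : Fin m, i ≤ j → lam j ≤ lam i)
    (hlamsum : ∑ r, lam r = d * D)
    (S : (r : Fin m) → Fin (lam r) → Fin m)
    (hSreg : TabRegular lam S)
    (hScont : ∀ i : Fin m, tabCount lam S i = D * ρ i)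
    (eρ : ℕ) (heρ : eρ = ∑ i : Fin m, ⌈(ρ i : ℚ) / ((D : ℚ) - 2)⌉₊)
    (δ : ℕ) (hδ : δ = m * eρ + d) :
    ∃ T : (r : Fin m) → Fin (eρ * D + lam r) → Fin δ,
      (∀ a : Fin δ, tabCount (fun r => eρ * D + lam r) T a = D) ∧
      (∀ φ : Fin δ → Fin m,
          TabRegular (fun r => eρ * D + lam r) (fun r c => φ (T r c)) →
          ∃ π : Equiv.Perm (Fin m),
            tabRight lam (eρ * D) (fun r c => φ (T r c)) = fun r c => π (S r c)) ∧
      (∀ φ : Fin δ → Fin m,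
          TabRegular (fun r => eρ * D + lam r) (fun r c => φ (T r c)) →
          TabDuplex (fun _ : Fin m => eρ * D) (tabLeft lam (eρ * D) (fun r c => φ (T r c)))) ∧
      (∃ φ : Fin δ → Fin m,
          TabRegular (fun r => eρ * D + lam r) (fun r c => φ (T r c)) ∧
          tabRight lam (eρ * D) (fun r c => φ (T r c)) = S) := by
  subst hρsum
  obtain ⟨T, hT, hperm, hplex, hlift⟩ := tableau_lifting_even_general (by omega)
    (fun i => le_natCeil_div_mul (by omega) (ρ i)) hd hSreg hScont heρ hδ
  exact ⟨T, hT, hperm, fun φ hφ => (hplex φ hφ).tabDuplex hDeven, hlift⟩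
end

section
/- For every odd integer D ≥ 3 and every integer K ≥ 1, there exists a (D,K)-paired-hypergraph whose number of block edges is exactly 2·⌈K/(2(D−2))⌉. -/
open scoped BigOperators

/-- A `(D,K)`-hypergraph: a finite vertex set `V` together with block edges and name
edges, each forming a set partition of `V`, where every block edge has exactly `D`
vertices, every name edge has fewer than `D` vertices, there are exactly `K` more name
edges than block edges, the hypergraph is connected, and some name edge and some block
edge share at least two vertices. -/
structure DKHypergraph (D K : ℕ) (V : Type) [Fintype V] [DecidableEq V] where
  blockEdges : Finpartition (Finset.univ : Finset V)
  nameEdges : Finpartition (Finset.univ : Finset V)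
  block_card : ∀ e ∈ blockEdges.parts, e.card = D
  name_card : ∀ e ∈ nameEdges.parts, e.card < D
  count_diff : nameEdges.parts.card = blockEdges.parts.card + K
  connected : ∀ v w : V, ∃ (n : ℕ) (e : Fin (n + 1) → Finset V),
      (∀ i, e i ∈ blockEdges.parts ∪ nameEdges.parts) ∧
      v ∈ e 0 ∧ w ∈ e (Fin.last n) ∧
      ∀ i : Fin n, ((e i.castSucc) ∩ (e i.succ)).Nonempty
  share : ∃ eN ∈ nameEdges.parts, ∃ eB ∈ blockEdges.parts, 2 ≤ (eN ∩ eB).card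

/-- A `(D,K)`-paired-hypergraph: a `(D,K)`-hypergraph whose block edges can be grouped
into disjoint pairs `{e, f e}` (via a fixed-point-free involution `f` of the block
edges) such that the two block edges of each pair are connected by a name edge. -/
structure DKPairedHypergraph (D K : ℕ) (V : Type) [Fintype V] [DecidableEq V]
    extends DKHypergraph D K V where
  paired : ∃ f : Finset V → Finset V, ∀ e ∈ blockEdges.parts,
      f e ∈ blockEdges.parts ∧ f (f e) = e ∧ f e ≠ e ∧
      ∃ eN ∈ nameEdges.parts, ∃ v ∈ e, ∃ w ∈ f e, v ∈ eN ∧ w ∈ eN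

/-!
Order the `B * D` vertices linearly, let the block edges be the `B` consecutive intervals of
length `D`, and let the name edges be the intervals cut out by a set `S` of break points in
`(0, B * D)`. If no break point is a multiple of `D`, the name edges join consecutive blocks; if `1`
is not a break point, the first name edge and the first block edge share `0` and `1`; and
`#S + 1` name edges are produced. Taking all non-multiples of `D` in `[2, B * D)` gives
`B * (D - 1)` name edges, and keeping only those in `[D - 1, (B - 1) * D + 1]` still leaves name
edges of fewer than `D` vertices but only `(B - 2) * (D - 1) + 3` of them. Hence every `K` with
`(B - 2) * (D - 2) < K ≤ B * (D - 2)` is realised; for `B = 2 * m` this range says exactly that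
`m = ⌈K / (2 * (D - 2))⌉`.
-/

section FiberPartition

variable {α β : Type*} [Fintype α] [DecidableEq β]

/-- The fiber of `f` over `b`; for a labelling `f` of vertices, the hyperedge with label `b`. -/
def fiber (f : α → β) (b : β) : Finset α := {a | f a = b}

@[simp]
lemma mem_fiber {f : α → β} {b : β} {a : α} : a ∈ fiber f b ↔ f a = b := by
  simp only [fiber, Finset.mem_filter, Finset.mem_univ, true_and]

lemma image_fiber_of_surjective {f : α → β} (hf : f.Surjective) (b : β) :
    (fiber f b).image f = {b} := by
  ext c
  simp only [Finset.mem_image, mem_fiber, Finset.mem_singleton]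
  refine ⟨fun ⟨_, ha, hc⟩ ↦ hc ▸ ha, fun hc ↦ ?_⟩
  obtain ⟨a, ha⟩ := hf b
  exact ⟨a, ha, ha.trans hc.symm⟩

lemma exists_map_fiber_eq_fiber {f : α → β} (hf : f.Surjective) {σ : β → β}
    (hσ : σ.Involutive) :
    ∃ g : Finset α → Finset α, ∀ b, g (fiber f b) = fiber f (σ b) := by
  refine ⟨fun e ↦ {a | σ (f a) ∈ e.image f}, fun b ↦ ?_⟩
  ext a
  simp [image_fiber_of_surjective hf, hσ.eq_iff]

variable [DecidableEq α]

/-- The partition of a finite type into the nonempty fibers of `f`. The block edges and the name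
edges of a hypergraph are both encoded in this way, by labelling the vertices. -/
def fiberPartition (f : α → β) : Finpartition (Finset.univ : Finset α) :=
  have : DecidableRel (Setoid.ker f).r := fun _ _ ↦ decEq (f _) (f _)
  Finpartition.ofSetoid (Setoid.ker f)

lemma parts_fiberPartition (f : α → β) :
    (fiberPartition f).parts = (Finset.univ.image f).image (fiber f) := by
  rw [Finset.image_image]
  exact Finset.image_congr fun _ _ ↦ Finset.filter_congr fun _ _ ↦ eq_comm

lemma fiber_mem_parts_fiberPartition (f : α → β) (a : α) :
    fiber f (f a) ∈ (fiberPartition f).parts := by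
  rw [parts_fiberPartition]
  exact Finset.mem_image_of_mem _ (Finset.mem_image_of_mem f (Finset.mem_univ a))

lemma mem_parts_fiberPartition {f : α → β} {e : Finset α} :
    e ∈ (fiberPartition f).parts ↔ ∃ a, fiber f (f a) = e := by
  simp only [parts_fiberPartition, Finset.mem_image, Finset.mem_univ, true_and,
    exists_exists_eq_and]

lemma card_parts_fiberPartition (f : α → β) :
    (fiberPartition f).parts.card = (Finset.univ.image f).card := by
  rw [parts_fiberPartition]
  refine Finset.card_image_of_injOn fun b hb c _ hbc ↦ ?_
  obtain ⟨a, -, rfl⟩ := Finset.mem_image.1 hb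
  exact mem_fiber.1 (hbc ▸ mem_fiber.2 rfl : a ∈ fiber f c)

end FiberPartition

section EdgeChain

variable {α : Type*} [DecidableEq α] {P : Finset (Finset α)}

lemma exists_edge_chain_of_reflTransGen (hP : ∀ v, ∃ e ∈ P, v ∈ e) {v w : α}
    (h : Relation.ReflTransGen (fun x y ↦ ∃ e ∈ P, x ∈ e ∧ y ∈ e) v w) :
    ∃ (n : ℕ) (e : Fin (n + 1) → Finset α), (∀ i, e i ∈ P) ∧ v ∈ e 0 ∧ w ∈ e (Fin.last n) ∧
      ∀ i : Fin n, (e i.castSucc ∩ e i.succ).Nonempty := by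
  induction h using Relation.ReflTransGen.head_induction_on with
  | refl =>
    obtain ⟨e, he, hw⟩ := hP w
    exact ⟨0, fun _ ↦ e, fun _ ↦ he, hw, hw, fun i ↦ i.elim0⟩
  | @head x y hxy _ ih =>
    obtain ⟨e₀, he₀, hx, hy⟩ := hxy
    obtain ⟨n, e, he, hy', hw, hinter⟩ := ih
    refine ⟨n + 1, Fin.cons e₀ e, Fin.cases he₀ he, hx, hw, Fin.cases ?_ hinter⟩
    exact ⟨y, Finset.mem_inter.2 ⟨hy, hy'⟩⟩

lemma exists_edge_chain_of_covBy [LinearOrder α] [SuccOrder α] [IsSuccArchimedean α]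
    (hP : ∀ v, ∃ e ∈ P, v ∈ e) (hcov : ∀ v w, v ⋖ w → ∃ e ∈ P, v ∈ e ∧ w ∈ e) (v w : α) :
    ∃ (n : ℕ) (e : Fin (n + 1) → Finset α), (∀ i, e i ∈ P) ∧ v ∈ e 0 ∧ w ∈ e (Fin.last n) ∧
      ∀ i : Fin n, (e i.castSucc ∩ e i.succ).Nonempty := by
  have hstep {a b i : α} (hi : i ∈ Set.Ico a b) : ∃ e ∈ P, i ∈ e ∧ Order.succ i ∈ e :=
    hcov _ _ (Order.covBy_succ_of_not_isMax (not_isMax_of_lt hi.2))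
  refine exists_edge_chain_of_reflTransGen hP
    (reflTransGen_of_succ _ (fun _ ↦ hstep) fun i hi ↦ ?_)
  obtain ⟨e, he, hmem⟩ := hstep hi
  exact ⟨e, he, hmem.symm⟩

end EdgeChain

section LastCut

variable {S : Finset ℕ}

/-- The left endpoint of the interval containing `v`, when `ℕ` is cut just before each element
of `S`: the largest element of `S` that is at most `v`, or `0` if there is none. -/
def lastCut (S : Finset ℕ) (v : ℕ) : ℕ :=
  Nat.findGreatest (· ∈ S) v

lemma lastCut_succ_of_notMem {v : ℕ} (hv : v + 1 ∉ S) : lastCut S (v + 1) = lastCut S v :=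
  Nat.findGreatest_of_not hv

lemma lastCut_lt_lastCut {v c w : ℕ} (hc : c ∈ S) (hvc : v < c) (hcw : c ≤ w) :
    lastCut S v < lastCut S w :=
  (Nat.findGreatest_le v).trans_lt (hvc.trans_le (Nat.le_findGreatest hcw hc))

lemma image_lastCut {N : ℕ} (hN : 0 < N) (hS : ∀ c ∈ S, c < N) :
    (Finset.univ.image fun v : Fin N ↦ lastCut S v) = insert 0 S := by
  ext c
  simp only [Finset.mem_image, Finset.mem_univ, true_and, Finset.mem_insert]
  constructor
  · rintro ⟨v, hv⟩
    exact or_iff_not_imp_left.2 (Nat.findGreatest_of_ne_zero hv)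
  · rintro (rfl | hc)
    · exact ⟨⟨0, hN⟩, Nat.findGreatest_zero⟩
    · exact ⟨⟨c, hS c hc⟩, Nat.findGreatest_eq hc⟩

lemma card_fiber_lastCut_lt {N D : ℕ}
    (hS : ∀ p, p + D ≤ N → ∃ c ∈ S, c ∈ Set.Ioo p (p + D)) (v : Fin N) :
    (fiber (fun w : Fin N ↦ lastCut S w) (lastCut S v)).card < D := by
  set F := fiber (fun w : Fin N ↦ lastCut S w) (lastCut S v)
  have hv : v ∈ F := mem_fiber.2 rfl
  obtain ⟨a, ha, hmin⟩ := F.exists_min_image id ⟨v, hv⟩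
  have hlt (w) (hw : w ∈ F) : (w : ℕ) + 1 < a + D := by
    by_contra! hle
    obtain ⟨c, hc, hac, hcD⟩ := hS a (hle.trans w.isLt)
    have hlabel := lastCut_lt_lastCut hc hac (show c ≤ w by lia)
    exact hlabel.ne ((mem_fiber.1 ha).trans (mem_fiber.1 hw).symm)
  have hsub : F.map Fin.valEmbedding ⊆ Finset.Ico (a : ℕ) (a + D - 1) := by
    intro p hp
    obtain ⟨w, hw, rfl⟩ := Finset.mem_map.1 hp
    exact Finset.mem_Ico.2 ⟨hmin w hw, Nat.lt_sub_of_add_lt (hlt w hw)⟩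
  have hcard := Finset.card_le_card hsub
  rw [Finset.card_map, Nat.card_Ico] at hcard
  have := hlt a ha
  lia

end LastCut

section Blocks

lemma card_fiber_divNat {B D : ℕ} (i : Fin B) :
    (fiber (Fin.divNat : Fin (B * D) → Fin B) i).card = D := by
  have hinj : Function.Injective (Fin.mkDivMod i : Fin D → Fin (B * D)) := fun j k hjk ↦ by
    simpa using congrArg Fin.modNat hjk
  have himage : fiber Fin.divNat i = Finset.univ.image (Fin.mkDivMod i : Fin D → Fin (B * D)) := by
    ext v
    simp only [mem_fiber, Finset.mem_image, Finset.mem_univ, true_and]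
    constructor
    · rintro rfl
      exact ⟨v.modNat, Fin.divNat_mkDivMod_modNat v⟩
    · rintro ⟨j, rfl⟩
      exact Fin.divNat_mkDivMod i j
  rw [himage, Finset.card_image_of_injective _ hinj, Finset.card_univ, Fintype.card_fin]

lemma surjective_divNat {B D : ℕ} (hD : 0 < D) :
    Function.Surjective (Fin.divNat : Fin (B * D) → Fin B) :=
  fun i ↦ ⟨i.mkDivMod ⟨0, hD⟩, Fin.divNat_mkDivMod i _⟩

lemma card_parts_fiberPartition_divNat {B D : ℕ} (hD : 0 < D) :
    (fiberPartition (Fin.divNat : Fin (B * D) → Fin B)).parts.card = B := by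
  rw [card_parts_fiberPartition, Finset.image_univ_of_surjective (surjective_divNat hD),
    Finset.card_univ, Fintype.card_fin]

lemma exists_involutive_adjacent (m : ℕ) :
    ∃ σ : Fin (2 * m) → Fin (2 * m), σ.Involutive ∧
      ∀ i, (σ i : ℕ) = i + 1 ∨ (i : ℕ) = σ i + 1 := by
  refine ⟨fun i ↦ ⟨if (i : ℕ) % 2 = 0 then i + 1 else i - 1, by split_ifs <;> lia⟩,
    fun i ↦ Fin.ext ?_, fun i ↦ ?_⟩
  all_goals
    dsimp only
    split_ifs <;> lia

end Blocks

/-- `S` is a set of break points for which the intervals of `[0, B * D)` that it cuts out can be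
the name edges of a hypergraph with block edges `[i * D, (i + 1) * D)`. -/
structure IsNameCut (D B : ℕ) (S : Finset ℕ) : Prop where
  one_lt : ∀ c ∈ S, 1 < c
  lt_mul : ∀ c ∈ S, c < B * D
  not_dvd : ∀ c ∈ S, ¬ D ∣ c
  exists_mem_Ioo : ∀ p, p + D ≤ B * D → ∃ c ∈ S, c ∈ Set.Ioo p (p + D)

namespace IsNameCut

variable {D B : ℕ} {S : Finset ℕ}

lemma lastCut_eq_of_dvd (hS : IsNameCut D B S) {v w : ℕ} (hvw : w = v + 1) (hw : D ∣ w) :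
    lastCut S v = lastCut S w := by
  subst hvw
  exact (lastCut_succ_of_notMem fun hmem ↦ hS.not_dvd _ hmem hw).symm

lemma exists_common_edge (hS : IsNameCut D B S) {v w : Fin (B * D)} (hvw : (w : ℕ) = v + 1) :
    ∃ e ∈ (fiberPartition (Fin.divNat : Fin (B * D) → Fin B)).parts ∪
        (fiberPartition fun x : Fin (B * D) ↦ lastCut S x).parts, v ∈ e ∧ w ∈ e := by
  by_cases hw : D ∣ w
  · refine ⟨_, Finset.mem_union_right _ (fiber_mem_parts_fiberPartition _ w), ?_, ?_⟩
    · simpa using hS.lastCut_eq_of_dvd hvw hw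
    · simp
  · refine ⟨_, Finset.mem_union_left _ (fiber_mem_parts_fiberPartition _ w), ?_, ?_⟩
    · have hdiv : (v : ℕ) / D = w / D := by
        rw [hvw] at hw ⊢
        rw [Nat.succ_div, if_neg hw, add_zero]
      simpa [Fin.ext_iff] using hdiv
    · simp

lemma card_parts_fiberPartition_lastCut (hS : IsNameCut D B S) (hBD : 0 < B * D) :
    (fiberPartition fun v : Fin (B * D) ↦ lastCut S v).parts.card = S.card + 1 := by
  rw [card_parts_fiberPartition, image_lastCut hBD hS.lt_mul, Finset.card_insert_of_notMem]
  exact fun h0 ↦ absurd (hS.one_lt 0 h0) (by simp)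

/-- The hypergraph on `[0, B * D)` whose block edges are the intervals `[i * D, (i + 1) * D)` and
whose name edges are the intervals cut out by `S`. -/
def hypergraph {K : ℕ} (hS : IsNameCut D B S) (hD : 1 < D) (hB : 0 < B)
    (hcard : S.card + 1 = B + K) : DKHypergraph D K (Fin (B * D)) where
  blockEdges := fiberPartition Fin.divNat
  nameEdges := fiberPartition fun v ↦ lastCut S v
  block_card e he := by
    obtain ⟨v, rfl⟩ := mem_parts_fiberPartition.1 he
    exact card_fiber_divNat v.divNat
  name_card e he := by
    obtain ⟨v, rfl⟩ := mem_parts_fiberPartition.1 he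
    exact card_fiber_lastCut_lt hS.exists_mem_Ioo v
  count_diff := by
    rw [hS.card_parts_fiberPartition_lastCut (by positivity),
      card_parts_fiberPartition_divNat (by positivity), hcard]
  connected :=
    exists_edge_chain_of_covBy
      (fun v ↦ ⟨_, Finset.mem_union_left _ (fiber_mem_parts_fiberPartition _ v), by simp⟩)
      fun _ _ hvw ↦ hS.exists_common_edge (Nat.covBy_iff_add_one_eq.1 hvw.coe_fin).symm
  share := by
    have hlt : 1 < B * D := hD.trans_le (Nat.le_mul_of_pos_left D hB)
    let v₀ : Fin (B * D) := ⟨0, by positivity⟩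
    let v₁ : Fin (B * D) := ⟨1, hlt⟩
    have hname : lastCut S v₁ = lastCut S v₀ :=
      lastCut_succ_of_notMem fun hmem ↦ (hS.one_lt _ hmem).false
    have hblock : v₁.divNat = v₀.divNat := by
      simp [Fin.ext_iff, v₀, v₁, Nat.div_eq_of_lt hD]
    refine ⟨_, fiber_mem_parts_fiberPartition _ v₀, _, fiber_mem_parts_fiberPartition _ v₀, ?_⟩
    refine Finset.one_lt_card.2 ⟨v₀, by simp, v₁, by simp [hname, hblock], ?_⟩
    simp [Fin.ext_iff, v₀, v₁]

lemma exists_lastCut_eq_of_consecutive (hS : IsNameCut D B S) (hD : 0 < D) {i j : Fin B}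
    (hij : (j : ℕ) = i + 1) :
    ∃ v w : Fin (B * D), v.divNat = i ∧ w.divNat = j ∧ lastCut S v = lastCut S w := by
  refine ⟨i.mkDivMod ⟨D - 1, by lia⟩, j.mkDivMod ⟨0, hD⟩, by simp, by simp,
    hS.lastCut_eq_of_dvd ?_ ?_⟩
  · simp only [Fin.coe_mkDivMod, hij, mul_add_one]
    lia
  · simp

lemma exists_lastCut_eq_of_adjacent (hS : IsNameCut D B S) (hD : 0 < D) {i j : Fin B}
    (hij : (j : ℕ) = i + 1 ∨ (i : ℕ) = j + 1) :
    ∃ v w : Fin (B * D), v.divNat = i ∧ w.divNat = j ∧ lastCut S v = lastCut S w := by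
  rcases hij with hij | hji
  · exact hS.exists_lastCut_eq_of_consecutive hD hij
  · obtain ⟨w, v, hw, hv, hlabel⟩ := hS.exists_lastCut_eq_of_consecutive hD hji
    exact ⟨v, w, hv, hw, hlabel.symm⟩

lemma exists_block_pairing {m : ℕ} (hS : IsNameCut D (2 * m) S) (hD : 0 < D) :
    ∃ f : Finset (Fin (2 * m * D)) → Finset (Fin (2 * m * D)),
      ∀ e ∈ (fiberPartition Fin.divNat).parts,
        f e ∈ (fiberPartition Fin.divNat).parts ∧ f (f e) = e ∧ f e ≠ e ∧
        ∃ eN ∈ (fiberPartition fun v : Fin (2 * m * D) ↦ lastCut S v).parts,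
          ∃ v ∈ e, ∃ w ∈ f e, v ∈ eN ∧ w ∈ eN := by
  obtain ⟨σ, hσ, hadj⟩ := exists_involutive_adjacent m
  obtain ⟨f, hf⟩ := exists_map_fiber_eq_fiber (surjective_divNat hD) hσ
  refine ⟨f, fun e he ↦ ?_⟩
  obtain ⟨u, rfl⟩ := mem_parts_fiberPartition.1 he
  obtain ⟨v, w, hv, hw, hlabel⟩ := hS.exists_lastCut_eq_of_adjacent hD (hadj u.divNat)
  have hne : σ u.divNat ≠ u.divNat := fun hfix ↦ by
    have := hadj u.divNat
    rw [hfix] at this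
    lia
  rw [hf, hf, hσ]
  refine ⟨?_, rfl, fun heq ↦ hne ?_, _, fiber_mem_parts_fiberPartition _ v, v, by simpa using hv, w,
    by simpa using hw, by simp, by simp [hlabel]⟩
  · rw [← hw]
    exact fiber_mem_parts_fiberPartition _ w
  · have hmem : w ∈ fiber Fin.divNat u.divNat := heq ▸ mem_fiber.2 hw
    exact hw.symm.trans (mem_fiber.1 hmem)

/-- The hypergraph `IsNameCut.hypergraph` with an even number of block edges, in which the
`2 * i`-th and the `2 * i + 1`-st block edge form a pair. -/
def pairedHypergraph {K m : ℕ} (hS : IsNameCut D (2 * m) S) (hD : 1 < D) (hm : 0 < m)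
    (hcard : S.card + 1 = 2 * m + K) : DKPairedHypergraph D K (Fin (2 * m * D)) where
  toDKHypergraph := hS.hypergraph hD (by positivity) hcard
  paired := hS.exists_block_pairing (by positivity)

end IsNameCut

section Nonmultiples

/-- The natural numbers in the interval `(a, b]` that are not divisible by `D`. -/
def nonmultiples (D a b : ℕ) : Finset ℕ := {c ∈ Finset.Ioc a b | ¬ D ∣ c}

lemma mem_nonmultiples {D a b c : ℕ} : c ∈ nonmultiples D a b ↔ (a < c ∧ c ≤ b) ∧ ¬ D ∣ c := by
  rw [nonmultiples, Finset.mem_filter, Finset.mem_Ioc]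

lemma nonmultiples_subset_nonmultiples {a₁ a₂ b₁ b₂ : ℕ} (D : ℕ) (ha : a₁ ≤ a₂) (hb : b₂ ≤ b₁) :
    nonmultiples D a₂ b₂ ⊆ nonmultiples D a₁ b₁ :=
  Finset.filter_subset_filter _ (Finset.Ioc_subset_Ioc ha hb)

lemma card_nonmultiples_zero (D n : ℕ) : (nonmultiples D 0 n).card + n / D = n := by
  have hsum := Finset.card_filter_add_card_filter_not (s := Finset.Ioc 0 n) (D ∣ ·)
  rwa [Nat.Ioc_filter_dvd_card_eq_div, Nat.card_Ioc, add_comm] at hsum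

lemma card_nonmultiples (D : ℕ) {a b : ℕ} (hab : a ≤ b) :
    (nonmultiples D a b).card + b / D + a = b + a / D := by
  have hsplit : (nonmultiples D 0 b).card =
      (nonmultiples D 0 a).card + (nonmultiples D a b).card := by
    rw [nonmultiples, ← Finset.Ioc_union_Ioc_eq_Ioc a.zero_le hab, Finset.filter_union,
      Finset.card_union_of_disjoint]
    · rfl
    · exact Finset.disjoint_filter_filter (Finset.Ioc_disjoint_Ioc_of_le le_rfl)
  have ha := card_nonmultiples_zero D a
  have hb := card_nonmultiples_zero D b
  lia

lemma not_dvd_add_one {D n : ℕ} (hD : 1 < D) (hn : D ∣ n) : ¬ D ∣ n + 1 := fun h ↦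
  hD.ne' (Nat.dvd_one.1 ((Nat.dvd_add_right hn).1 h))

lemma exists_mem_nonmultiples_Ioo {D q p : ℕ} (hD : 3 ≤ D) (hq : D ∣ q) (hq₀ : 0 < q)
    (hp : p ≤ q) : ∃ c ∈ nonmultiples D (D - 2) (q + 1), c ∈ Set.Ioo p (p + D) := by
  simp only [mem_nonmultiples, Set.mem_Ioo]
  have hDq : D ≤ q := Nat.le_of_dvd hq₀ hq
  rcases le_or_gt (p + 1) (D - 2) with hpD | hpD
  · have hdvd : ¬ D ∣ D - 1 := Nat.not_dvd_of_pos_of_lt (by lia) (by lia)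
    exact ⟨D - 1, ⟨by lia, hdvd⟩, by lia⟩
  by_cases hdvd : D ∣ p + 1
  · have hpq : p ≠ q := by
      rintro rfl
      exact not_dvd_add_one (by lia) hq hdvd
    exact ⟨p + 2, ⟨by lia, not_dvd_add_one (by lia) hdvd⟩, by lia⟩
  · exact ⟨p + 1, ⟨by lia, hdvd⟩, by lia⟩

lemma IsNameCut.of_subset {D B : ℕ} {S : Finset ℕ} (hD : 3 ≤ D) (hB : 2 ≤ B)
    (hlower : nonmultiples D (D - 2) ((B - 1) * D + 1) ⊆ S)
    (hupper : S ⊆ nonmultiples D 1 (B * D - 1)) : IsNameCut D B S where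
  one_lt c hc := (mem_nonmultiples.1 (hupper hc)).1.1
  lt_mul c hc := by
    have := (mem_nonmultiples.1 (hupper hc)).1
    lia
  not_dvd c hc := (mem_nonmultiples.1 (hupper hc)).2
  exists_mem_Ioo p hp := by
    have hpq : p ≤ (B - 1) * D := Nat.sub_one_mul B D ▸ Nat.le_sub_of_add_le hp
    obtain ⟨c, hc, hcp⟩ := exists_mem_nonmultiples_Ioo hD (Dvd.intro_left (B - 1) rfl)
      (Nat.mul_pos (by lia) (by lia)) hpq
    exact ⟨c, hlower hc, hcp⟩

lemma card_nonmultiples_lower {D B : ℕ} (hD : 2 ≤ D) (hB : 2 ≤ B) :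
    (nonmultiples D (D - 2) ((B - 1) * D + 1)).card = (B - 2) * (D - 1) + 2 := by
  obtain ⟨n, rfl⟩ := Nat.exists_eq_add_of_le' hB
  obtain ⟨d, rfl⟩ := Nat.exists_eq_add_of_le' hD
  have hdiv : ((n + 1) * (d + 2) + 1) / (d + 2) = n + 1 := by
    rw [mul_comm, Nat.mul_add_div (by lia), Nat.div_eq_of_lt (by lia), add_zero]
  have hdiv' : d / (d + 2) = 0 := Nat.div_eq_of_lt (by lia)
  have hcard := card_nonmultiples (d + 2) (show d ≤ (n + 1) * (d + 2) + 1 by nlinarith)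
  rw [hdiv, hdiv'] at hcard
  simp only [Nat.add_sub_cancel, Nat.add_succ_sub_one]
  linarith

lemma card_nonmultiples_upper {D B : ℕ} (hD : 2 ≤ D) (hB : 1 ≤ B) :
    (nonmultiples D 1 (B * D - 1)).card + 1 = B * (D - 1) := by
  obtain ⟨n, rfl⟩ := Nat.exists_eq_add_of_le' hB
  obtain ⟨d, rfl⟩ := Nat.exists_eq_add_of_le' hD
  have hlast : (n + 1) * (d + 2) - 1 = (d + 2) * n + (d + 1) :=
    Nat.sub_eq_of_eq_add (by ring)
  have hdiv : ((d + 2) * n + (d + 1)) / (d + 2) = n := by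
    rw [Nat.mul_add_div (by lia), Nat.div_eq_of_lt (by lia), add_zero]
  have hdiv' : 1 / (d + 2) = 0 := Nat.div_eq_of_lt (by lia)
  have hcard := card_nonmultiples (d + 2) (show 1 ≤ (d + 2) * n + (d + 1) by lia)
  rw [hdiv, hdiv'] at hcard
  rw [hlast, show d + 2 - 1 = d + 1 from rfl]
  linarith

lemma exists_isNameCut_card {D B K : ℕ} (hD : 3 ≤ D) (hB : 2 ≤ B)
    (hlower : (B - 2) * (D - 2) < K) (hupper : K ≤ B * (D - 2)) :
    ∃ S, IsNameCut D B S ∧ S.card + 1 = B + K := by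
  have hsub : nonmultiples D (D - 2) ((B - 1) * D + 1) ⊆ nonmultiples D 1 (B * D - 1) := by
    refine nonmultiples_subset_nonmultiples D (by lia) ?_
    have hle : D ≤ B * D := Nat.le_mul_of_pos_left D (by lia)
    rw [Nat.sub_one_mul]
    lia
  have hstep (n : ℕ) : n * (D - 1) = n * (D - 2) + n := by
    rw [← Nat.mul_add_one, show D - 2 + 1 = D - 1 by lia]
  have hcard_lower := card_nonmultiples_lower (show 2 ≤ D by lia) hB
  have hcard_upper := card_nonmultiples_upper (show 2 ≤ D by lia) (show 1 ≤ B by lia)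
  rw [hstep] at hcard_lower hcard_upper
  obtain ⟨S, hlowerS, hSupper, hcard⟩ :=
    Finset.exists_subsuperset_card_eq hsub (n := B + K - 1) (by lia) (by lia)
  exact ⟨S, .of_subset hD hB hlowerS hSupper, by lia⟩

end Nonmultiples

lemma natCeil_div_bounds {K q : ℕ} (hK : 0 < K) (hq : 0 < q) :
    0 < ⌈(K / q : ℚ)⌉₊ ∧ (⌈(K / q : ℚ)⌉₊ - 1) * q < K ∧ K ≤ ⌈(K / q : ℚ)⌉₊ * q := by
  have hq' : (0 : ℚ) < q := by exact_mod_cast hq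
  have hpos : 0 < ⌈(K / q : ℚ)⌉₊ := Nat.ceil_pos.2 (by positivity)
  refine ⟨hpos, ?_, ?_⟩
  · have := Nat.lt_ceil.1 (Nat.sub_one_lt_of_lt hpos)
    rw [lt_div_iff₀ hq'] at this
    exact_mod_cast this
  · have := Nat.le_ceil (K / q : ℚ)
    rw [div_le_iff₀ hq'] at this
    exact_mod_cast this

theorem exists_pairedHypergraph_card_blockEdges {D K m : ℕ} (hD : 3 ≤ D) (hm : 0 < m)
    (hlower : (m - 1) * (2 * (D - 2)) < K) (hupper : K ≤ m * (2 * (D - 2))) :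
    ∃ H : DKPairedHypergraph D K (Fin (2 * m * D)), H.blockEdges.parts.card = 2 * m := by
  obtain ⟨S, hS, hcard⟩ := exists_isNameCut_card (B := 2 * m) (K := K) hD (by lia)
    (by rwa [← Nat.mul_sub_one, mul_comm 2, mul_assoc]) (by rwa [mul_comm 2, mul_assoc])
  exact ⟨hS.pairedHypergraph (by lia) hm hcard, card_parts_fiberPartition_divNat (by lia)⟩

theorem exists_DK_paired_hypergraph_general (D K : ℕ) (hD : 3 ≤ D) (hK : 1 ≤ K) :
    ∃ (n : ℕ) (H : DKPairedHypergraph D K (Fin n)),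
      H.blockEdges.parts.card = 2 * ⌈(K : ℚ) / (2 * ((D : ℚ) - 2))⌉₊ := by
  have hq : ((2 * (D - 2) : ℕ) : ℚ) = 2 * ((D : ℚ) - 2) := by
    rw [Nat.cast_mul, Nat.cast_sub (by lia), Nat.cast_ofNat]
  obtain ⟨hm, hlower, hupper⟩ := natCeil_div_bounds hK (show 0 < 2 * (D - 2) by lia)
  rw [← hq]
  exact ⟨_, exists_pairedHypergraph_card_blockEdges hD hm hlower hupper⟩

/-- For every odd `D ≥ 3` and every `K ≥ 1` there is a `(D,K)`-paired-hypergraph with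
exactly `2⌈K/(2(D-2))⌉` block edges. -/
theorem exists_DK_paired_hypergraph (D K : ℕ) (hD : 3 ≤ D) (hDodd : Odd D) (hK : 1 ≤ K) :
    ∃ (n : ℕ) (H : DKPairedHypergraph D K (Fin n)),
      H.blockEdges.parts.card = 2 * ⌈(K : ℚ) / (2 * ((D : ℚ) - 2))⌉₊ :=
  exists_DK_paired_hypergraph_general D K hD hK
end
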